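/- arXiv:2308.11694 — 2 statements merged into one kernel-verified Lean document; each statement's English description precedes it below -/
import Mathlib

section
/- For every integer N ≥ 402 there exists a prime number p not dividing N such that (p−1)·ψ(N)/12 + 2^{ω(N)} > 4·(p+1)², where ψ(N) = N·∏_{q prime, q ∣ N}(1 + 1/q) and ω(N) is the number of distinct prime divisors of N. (This is the arithmetic inequality, violating Ogg's bound 4(p+1)² ≥ L_p(N) for tetraelliptic curves, which shows that X_0(N) is not tetraelliptic for all N ≥ 402.) -/
open Finset

/-
A small prime `p ∤ N` works as soon as `ψ(N)` exceeds roughly `48 (p + 1)² / (p - 1)`. If `3 ∤ N`,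
take `p = 3`; if `3 ∣ N` and `2 ∤ N`, take `p = 2`. If `6 ∣ N`, then `ψ(N) ≥ 2 N`, and we take the
least prime `p ∤ N`. The primorial of `p - 1` divides `N`. For `p ≥ 17` it is divisible by
`2 · 3 · 5 · 7` and, by Bertrand's postulate, by a further prime larger than `(p - 1) / 2`, so
`N > 105 (p - 1)`; this also holds for `p = 13`, and `N ≥ 368` suffices for `p = 5, 7, 11`.
-/

section Primorial

lemma primorial_dvd_of_forall_prime_dvd {n N : ℕ} (h : ∀ q : ℕ, q.Prime → q ≤ n → q ∣ N) :
    primorial n ∣ N := by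
  refine prod_primes_dvd N (fun q hq => ?_) (fun q hq => ?_) <;>
    obtain ⟨hqn, hq⟩ := mem_filter.1 hq
  · exact hq.prime
  · exact h q hq (Nat.lt_succ_iff.1 (mem_range.1 hqn))

lemma exists_prime_not_dvd_primorial_dvd {N : ℕ} (hN : N ≠ 0) :
    ∃ p : ℕ, p.Prime ∧ ¬ p ∣ N ∧ primorial (p - 1) ∣ N := by
  classical
  have exists_not_dvd : ∃ p : ℕ, p.Prime ∧ ¬ p ∣ N := by
    obtain ⟨p, hNp, hp⟩ := Nat.exists_infinite_primes (N + 1)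
    exact ⟨p, hp, Nat.not_dvd_of_pos_of_lt (Nat.pos_of_ne_zero hN) hNp⟩
  obtain ⟨hp, hpN⟩ := Nat.find_spec exists_not_dvd
  refine ⟨Nat.find exists_not_dvd, hp, hpN, primorial_dvd_of_forall_prime_dvd fun q hq hle => ?_⟩
  by_contra hqN
  exact Nat.find_min exists_not_dvd (Nat.lt_of_le_pred hp.pos hle) ⟨hq, hqN⟩

lemma mul_primorial_lt_two_mul_primorial {k n : ℕ} (hk : 2 * k ≤ n) :
    n * primorial k < 2 * primorial n := by
  obtain hn | hn := lt_or_ge n 2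
  · obtain rfl : k = 0 := by omega
    interval_cases n <;> decide
  obtain ⟨r, hr, hlt, hle⟩ := Nat.exists_prime_lt_and_le_two_mul (n / 2) (by omega)
  have coprime : r.Coprime (primorial k) := by
    rw [hr.coprime_iff_not_dvd, hr.dvd_primorial_iff]
    omega
  have dvd : r * primorial k ∣ primorial n :=
    coprime.mul_dvd_of_dvd_of_dvd (hr.dvd_primorial_iff.2 (by omega))
      (primorial_dvd_primorial (by omega))
  calc n * primorial k < 2 * r * primorial k :=
        Nat.mul_lt_mul_of_pos_right (by omega) (primorial_pos k)
    _ = 2 * (r * primorial k) := mul_assoc ..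
    _ ≤ 2 * primorial n := Nat.mul_le_mul_left 2 (Nat.le_of_dvd (primorial_pos n) dvd)

lemma one_hundred_five_mul_lt_primorial {n : ℕ} (hn : 12 ≤ n) : 105 * n < primorial n := by
  obtain hlt | hge := lt_or_ge n 14
  · interval_cases n <;> decide
  · have primorial_seven : primorial 7 = 210 := by decide
    have := mul_primorial_lt_two_mul_primorial (k := 7) hge
    rw [primorial_seven] at this
    omega

end Primorial

section DedekindPsi

/-- The Dedekind function `ψ(N) = N ∏_{q ∣ N} (1 + 1/q)`, the index of `Γ₀(N)` in `SL₂(ℤ)`, as a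
rational number. -/
def dedekindPsi (N : ℕ) : ℚ := N * ∏ q ∈ N.primeFactors, (1 + 1 / (q : ℚ))

variable {N : ℕ}

lemma mul_prod_le_dedekindPsi {S : Finset ℕ} (hS : S ⊆ N.primeFactors) :
    (N : ℚ) * ∏ q ∈ S, (1 + 1 / (q : ℚ)) ≤ dedekindPsi N := by
  refine mul_le_mul_of_nonneg_left ?_ N.cast_nonneg
  refine prod_le_prod_of_subset_of_one_le hS (fun q _ => by positivity) fun q _ _ => ?_
  exact le_add_of_nonneg_right (by positivity)

lemma le_dedekindPsi : (N : ℚ) ≤ dedekindPsi N := by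
  simpa using mul_prod_le_dedekindPsi (empty_subset N.primeFactors)

lemma mul_le_dedekindPsi_of_prime_dvd {q : ℕ} (hq : q.Prime) (hqN : q ∣ N) :
    (N : ℚ) * (1 + 1 / (q : ℚ)) ≤ dedekindPsi N := by
  obtain rfl | hN := eq_or_ne N 0
  · simp [dedekindPsi]
  have subset : {q} ⊆ N.primeFactors :=
    singleton_subset_iff.2 (Nat.mem_primeFactors.2 ⟨hq, hqN, hN⟩)
  simpa using mul_prod_le_dedekindPsi subset

lemma two_mul_le_dedekindPsi (h6 : 6 ∣ N) : 2 * (N : ℚ) ≤ dedekindPsi N := by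
  obtain rfl | hN := eq_or_ne N 0
  · simp [dedekindPsi]
  have subset : {2, 3} ⊆ N.primeFactors := by
    have h2 : 2 ∣ N := dvd_trans (by norm_num) h6
    have h3 : 3 ∣ N := dvd_trans (by norm_num) h6
    simp [insert_subset_iff, Nat.prime_two, Nat.prime_three, h2, h3, hN]
  calc 2 * (N : ℚ) = N * ∏ q ∈ ({2, 3} : Finset ℕ), (1 + 1 / (q : ℚ)) := by norm_num; ring
    _ ≤ dedekindPsi N := mul_prod_le_dedekindPsi subset

lemma lt_dedekindPsi_of_not_three_dvd (hN : 368 ≤ N) (h3 : ¬ 3 ∣ N) : 372 < dedekindPsi N := by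
  have hN' : (368 : ℚ) ≤ N := mod_cast hN
  have cases_of_not_dvd : 372 < N ∨ 2 ∣ N ∨ N = 371 := by omega
  obtain hlt | h2 | rfl := cases_of_not_dvd
  · exact lt_of_lt_of_le (mod_cast hlt) le_dedekindPsi
  · have := mul_le_dedekindPsi_of_prime_dvd Nat.prime_two h2
    push_cast at this
    linarith
  · have := mul_le_dedekindPsi_of_prime_dvd Nat.prime_seven (by norm_num : 7 ∣ 371)
    push_cast at this
    linarith

end DedekindPsi

section OggBound

/-- Ogg's lower bound `L_p(N) = (p - 1) ψ(N) / 12 + 2 ^ ω(N)` for the number of points of `X₀(N)`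
over the field with `p²` elements. -/
def oggBound (p N : ℕ) : ℚ :=
  ((p : ℚ) - 1) * dedekindPsi N / 12 + 2 ^ N.primeFactors.card

variable {p N : ℕ}

lemma lt_oggBound_of_le (h : 48 * ((p : ℚ) + 1) ^ 2 ≤ ((p : ℚ) - 1) * dedekindPsi N) :
    4 * ((p : ℚ) + 1) ^ 2 < oggBound p N := by
  have : (0 : ℚ) < 2 ^ N.primeFactors.card := by positivity
  unfold oggBound
  linarith

lemma lt_oggBound_three (hN : 368 ≤ N) (h3 : ¬ 3 ∣ N) :
    4 * (((3 : ℕ) : ℚ) + 1) ^ 2 < oggBound 3 N := by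
  have lt_psi := lt_dedekindPsi_of_not_three_dvd hN h3
  have card_ne_zero : N.primeFactors.card ≠ 0 :=
    card_ne_zero.2 (Nat.nonempty_primeFactors.2 (by omega))
  have two_le_two_pow : (2 : ℚ) ≤ 2 ^ N.primeFactors.card := le_self_pow₀ one_le_two card_ne_zero
  unfold oggBound
  push_cast
  linarith

lemma lt_oggBound_two (hN : 324 ≤ N) (h3 : 3 ∣ N) :
    4 * (((2 : ℕ) : ℚ) + 1) ^ 2 < oggBound 2 N := by
  have hN' : (324 : ℚ) ≤ N := mod_cast hN
  have psi_ge := mul_le_dedekindPsi_of_prime_dvd Nat.prime_three h3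
  apply lt_oggBound_of_le
  push_cast at psi_ge ⊢
  linarith

lemma lt_oggBound_of_primorial_dvd (hN : 368 ≤ N) (h6 : 6 ∣ N) (hp : p.Prime) (hpN : ¬ p ∣ N)
    (hdvd : primorial (p - 1) ∣ N) : 4 * ((p : ℚ) + 1) ^ 2 < oggBound p N := by
  have psi_ge := two_mul_le_dedekindPsi h6
  apply lt_oggBound_of_le
  obtain hlt | hge := lt_or_ge p 13
  · have hN' : (368 : ℚ) ≤ N := mod_cast hN
    have small : p = 5 ∨ p = 7 ∨ p = 11 := by
      interval_cases p <;> first | omega | exact absurd hp (by norm_num)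
    obtain rfl | rfl | rfl := small <;> push_cast <;> linarith
  · have lt_N : 105 * (p - 1) < N :=
      (one_hundred_five_mul_lt_primorial (by omega)).trans_le (Nat.le_of_dvd (by omega) hdvd)
    have hp' : (13 : ℚ) ≤ p := mod_cast hge
    have lt_N' : 105 * ((p : ℚ) - 1) < N := by
      rw [← Nat.cast_pred hp.pos]
      exact mod_cast lt_N
    calc 48 * ((p : ℚ) + 1) ^ 2 ≤ ((p : ℚ) - 1) * (2 * (105 * ((p : ℚ) - 1))) := by nlinarith
      _ ≤ ((p : ℚ) - 1) * dedekindPsi N :=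
        mul_le_mul_of_nonneg_left (by linarith) (by linarith)

end OggBound

-- The bound `368` is optimal: no prime works for `N = 367`, where `ψ(N) = 368` and `ω(N) = 1`.
theorem stmt2_general (N : ℕ) (hN : 368 ≤ N) :
    ∃ p : ℕ, p.Prime ∧ ¬ p ∣ N ∧
      ((p : ℚ) - 1) * ((N : ℚ) * ∏ q ∈ N.primeFactors, (1 + 1 / (q : ℚ))) / 12
        + 2 ^ N.primeFactors.card > 4 * ((p : ℚ) + 1) ^ 2 := by
  by_cases h3 : 3 ∣ N
  · by_cases h2 : 2 ∣ N
    · obtain ⟨p, hp, hpN, hdvd⟩ := exists_prime_not_dvd_primorial_dvd (N := N) (by omega)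
      exact ⟨p, hp, hpN, lt_oggBound_of_primorial_dvd hN (by omega) hp hpN hdvd⟩
    · exact ⟨2, Nat.prime_two, h2, lt_oggBound_two (by omega) h3⟩
  · exact ⟨3, Nat.prime_three, h3, lt_oggBound_three hN h3⟩

/-- For every integer `N ≥ 402` there exists a prime `p` not dividing `N` such that
`(p − 1) · ψ(N) / 12 + 2 ^ ω(N) > 4 · (p + 1)²`, where
`ψ(N) = N · ∏_{q ∣ N prime} (1 + 1/q)` and `ω(N)` is the number of distinct prime
divisors of `N`. -/
theorem stmt2 (N : ℕ) (hN : 402 ≤ N) :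
    ∃ p : ℕ, p.Prime ∧ ¬ p ∣ N ∧
      ((p : ℚ) - 1) * ((N : ℚ) * ∏ q ∈ N.primeFactors, (1 + 1 / (q : ℚ))) / 12
        + 2 ^ N.primeFactors.card > 4 * ((p : ℚ) + 1) ^ 2 :=
  stmt2_general N (by omega)
end

section
/- For all integers x, y, z with (x, y, z) ≠ (0, 0, 0), one has 12x² + 12y² + 12z² − 16xy + 4xz − 16yz > 4. In particular, the equation 12x² + 12y² + 12z² − 16xy + 4xz − 16yz = 4 has no integer solutions. -/
/-!
Completing the square in `y` turns three times the form into
`4 (3y - 2(x + z))² + 20 (x² - xz + z²)`. For integers `x, z` not both zero the last bracket is a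
positive integer, so the form is at least `20 / 3`; for `x = z = 0` it is `12 y²`.
-/

/-- The ternary quadratic form whose values at integer points are the degrees of the rational
morphisms from `J₀(148)` to `X₀⁺(37)`, with coefficients in an arbitrary commutative ring. -/
def degreeForm {R : Type*} [CommRing R] (x y z : R) : R :=
  12 * x ^ 2 + 12 * y ^ 2 + 12 * z ^ 2 - 16 * x * y + 4 * x * z - 16 * y * z

section CommRing

variable {R : Type*} [CommRing R]

theorem three_mul_degreeForm (x y z : R) :
    3 * degreeForm x y z = 4 * (3 * y - 2 * (x + z)) ^ 2 + 20 * (x ^ 2 - x * z + z ^ 2) := by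
  unfold degreeForm
  ring

theorem degreeForm_zero_left_right (y : R) : degreeForm 0 y 0 = 12 * y ^ 2 := by
  simp [degreeForm]

end CommRing

theorem sq_sub_mul_add_sq_pos {R : Type*} [CommRing R] [LinearOrder R] [IsStrictOrderedRing R]
    {a b : R} (h : a ≠ 0 ∨ b ≠ 0) : 0 < a ^ 2 - a * b + b ^ 2 := by
  have two_mul_eq : 2 * (a ^ 2 - a * b + b ^ 2) = (a - b) ^ 2 + (a ^ 2 + b ^ 2) := by ring
  have sum_sq_pos : 0 < a ^ 2 + b ^ 2 := by
    rcases h with ha | hb <;> positivity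
  refine pos_of_mul_pos_right (a := 2) ?_ zero_le_two
  rw [two_mul_eq]
  positivity

theorem four_lt_degreeForm_of_ne_zero_or_ne_zero {x z : ℤ} (y : ℤ) (h : x ≠ 0 ∨ z ≠ 0) :
    4 < degreeForm x y z := by
  have one_le_sq_sub_mul_add_sq : 1 ≤ x ^ 2 - x * z + z ^ 2 := sq_sub_mul_add_sq_pos h
  linarith [three_mul_degreeForm x y z, sq_nonneg (3 * y - 2 * (x + z))]

theorem four_lt_degreeForm_zero_left_right {y : ℤ} (hy : y ≠ 0) : 4 < degreeForm 0 y 0 := by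
  have one_le_sq : 1 ≤ y ^ 2 := sq_pos_of_ne_zero hy
  linarith [degreeForm_zero_left_right y]

theorem four_lt_degreeForm {x y z : ℤ} (h : (x, y, z) ≠ (0, 0, 0)) : 4 < degreeForm x y z := by
  by_cases hxz : x ≠ 0 ∨ z ≠ 0
  · exact four_lt_degreeForm_of_ne_zero_or_ne_zero y hxz
  · obtain ⟨rfl, rfl⟩ : x = 0 ∧ z = 0 := by simpa only [not_or, not_not] using hxz
    exact four_lt_degreeForm_zero_left_right fun hy => h (by rw [hy])

/-- For all integers `x, y, z` with `(x, y, z) ≠ (0, 0, 0)` one has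
`12x² + 12y² + 12z² − 16xy + 4xz − 16yz > 4`; in particular this form never takes
the value `4`. -/
theorem stmt4 :
    (∀ x y z : ℤ, (x, y, z) ≠ (0, 0, 0) →
      4 < 12 * x ^ 2 + 12 * y ^ 2 + 12 * z ^ 2 - 16 * x * y + 4 * x * z - 16 * y * z) ∧
    (∀ x y z : ℤ,
      12 * x ^ 2 + 12 * y ^ 2 + 12 * z ^ 2 - 16 * x * y + 4 * x * z - 16 * y * z ≠ 4) := by
  refine ⟨fun _ _ _ h => four_lt_degreeForm h, fun x y z h_four => ?_⟩
  have h_origin : (x, y, z) = (0, 0, 0) := by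
    by_contra h
    exact (four_lt_degreeForm h).ne' h_four
  obtain ⟨rfl, rfl, rfl⟩ : x = 0 ∧ y = 0 ∧ z = 0 := by simpa only [Prod.mk.injEq] using h_origin
  norm_num at h_four
end
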